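/- arXiv:0907.3359 — 3 statements merged into one kernel-verified Lean document; each statement's English description precedes it below -/
import Mathlib

section
/- Let (S, 𝒮, m) be a σ-finite measure space, α > 0, and let H : (0,∞) → (0,∞) be regularly varying at infinity with exponent −α. Let R₊, R₋ : S × (0,∞) → [0,∞) be jointly measurable, nonincreasing in the second variable, and suppose there exist measurable w₊, w₋ : S → [0,∞) with R₊(s,u)/H(u) → w₊(s) and R₋(s,u)/H(u) → w₋(s) as u → ∞ for every s ∈ S, and a u₀ > 0 such that R₊(s,u) ≤ 2w₊(s)H(u) and R₋(s,u) ≤ 2w₋(s)H(u) for all u > u₀ and all s ∈ S. Let M ⊂ ℝ^d be compact and f : S × M → ℝ be jointly measurable, continuous in the second variable, with sup_{s∈S, t∈M} |f(s,t)| ≤ K < ∞. If for some ε ∈ (0, α) one has ∫_S (w₊(s) + w₋(s)) (sup_{t∈M} |f(s,t)|)^{α−ε} m(ds) < ∞, then lim_{u→∞} H(u)^{−1} ∫_S [ R₊(s, u / sup_{t∈M} f(s,t)₊) + R₋(s, u / sup_{t∈M} f(s,t)₋) ] m(ds) = ∫_S [ w₊(s) (sup_{t∈M} f(s,t)₊)^α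 + w₋(s) (sup_{t∈M} f(s,t)₋)^α ] m(ds), with the convention that a term R_±(s, u/0) is interpreted as 0 when the corresponding supremum vanishes. -/
/-!
The limit is taken under the integral sign by dominated convergence. Pointwise, with `g` the
relevant supremum,
`R(s, u/g) / H(u) = (R(s, u/g) / H(u/g)) * (H(g⁻¹ u) / H(u)) → w(s) * g ^ α`.

The dominating function comes from a Potter-type bound `H(u/g) ≤ C g^β H(u)`, uniform in
`g ∈ (0, K]` for large `u`, with `β = α - ε`. The uniform convergence theorem for regularly varying
functions is not needed: either `w` vanishes identically, and then so does the integrand for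
large `u`, or `w(s₀) > 0` for some `s₀`, and then `H` is asymptotically proportional to the
nonincreasing function `R(s₀, ·)`. For nonincreasing functions the Potter bound follows by iterating
`G(2u) ≤ 2^(-β) G(u)` (`dyadic_decay`, `potter_bound`). The bound on the integrand is
`tail_bound`, its pointwise limit `tail_tendsto`.
-/

open MeasureTheory Filter Set Topology

/-- The supremum over `M` of a jointly measurable function, continuous on `M`, is measurable: it
can be taken over a countable dense subset of `M`. -/
lemma measurable_sSup_image {S E : Type*} [MeasurableSpace S] [TopologicalSpace E]
    [SecondCountableTopology E] [MeasurableSpace E]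
    (M : Set E) (hne : M.Nonempty) (h : S → E → ℝ)
    (hm : Measurable fun p : S × E => h p.1 p.2) (hc : ∀ s, ContinuousOn (h s) M)
    (hb : ∀ s, BddAbove (h s '' M)) :
    Measurable fun s => sSup (h s '' M) := by
  have : Nonempty M := hne.to_subtype
  obtain ⟨D, hDc, hDd⟩ := TopologicalSpace.exists_countable_dense M
  refine measurable_of_Ioi fun c => ?_
  have key : (fun s => sSup (h s '' M)) ⁻¹' Ioi c = ⋃ t ∈ D, {s | c < h s (t : E)} := by
    ext s
    simp only [mem_preimage, mem_Ioi, mem_iUnion, mem_ofPred_eq, exists_prop]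
    rw [lt_csSup_iff (hb s) (hne.image _)]
    constructor
    · rintro ⟨_, ⟨t, ht, rfl⟩, hlt⟩
      have hcont : Continuous fun t : M => h s t := continuousOn_iff_continuous_domRestrict.1 (hc s)
      obtain ⟨q, hq, hqD⟩ := hDd.inter_open_nonempty _ (isOpen_lt continuous_const hcont)
        ⟨⟨t, ht⟩, hlt⟩
      exact ⟨q, hqD, hq⟩
    · rintro ⟨t, -, hlt⟩
      exact ⟨_, ⟨t, t.2, rfl⟩, hlt⟩
  rw [key]
  exact MeasurableSet.biUnion hDc fun t _ =>
    measurableSet_lt measurable_const (hm.comp measurable_prodMk_right)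

/-- A nonincreasing function that loses at least a factor `2^(-β)` at each doubling of its argument
decays at least like `l^(-β)`, up to the constant `2^β`. -/
lemma dyadic_decay {G : ℝ → ℝ} (hG : AntitoneOn G (Ioi 0)) {β X : ℝ} (hβ : 0 < β) (hX : 0 < X)
    (hGnn : ∀ u, 0 ≤ G u) (hdouble : ∀ u, X ≤ u → G (2 * u) ≤ 2 ^ (-β) * G u)
    {u l : ℝ} (hu : X ≤ u) (hl : 1 ≤ l) :
    G (l * u) ≤ 2 ^ β * l ^ (-β) * G u := by
  have hu0 : 0 < u := hX.trans_le hu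
  have iter : ∀ n : ℕ, G (2 ^ n * u) ≤ ((2 : ℝ) ^ n) ^ (-β) * G u := by
    intro n
    induction n with
    | zero => simp
    | succ n ih =>
      have h1 : X ≤ 2 ^ n * u :=
        hu.trans (le_mul_of_one_le_left hu0.le (one_le_pow₀ (by norm_num)))
      have h2 := hdouble _ h1
      have h3 : (0 : ℝ) ≤ 2 ^ (-β) := by positivity
      calc G (2 ^ (n + 1) * u) = G (2 * (2 ^ n * u)) := by congr 1; ring
        _ ≤ 2 ^ (-β) * G (2 ^ n * u) := h2
        _ ≤ 2 ^ (-β) * (((2 : ℝ) ^ n) ^ (-β) * G u) := by gcongr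
        _ = ((2 : ℝ) ^ (n + 1)) ^ (-β) * G u := by
          rw [pow_succ, Real.mul_rpow (by positivity) (by positivity)]; ring
  obtain ⟨n, hn1, hn2⟩ := exists_nat_pow_near hl (by norm_num : (1 : ℝ) < 2)
  have hl0 : 0 < l := by linarith
  have h4 : G (l * u) ≤ G (2 ^ n * u) :=
    hG (mem_Ioi.2 (by positivity)) (mem_Ioi.2 (by positivity)) (by gcongr)
  have h5 : ((2 : ℝ) ^ n) ^ (-β) ≤ 2 ^ β * l ^ (-β) := by
    have : ((2 : ℝ) ^ (n + 1)) ^ (-β) ≤ l ^ (-β) :=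
      Real.rpow_le_rpow_of_nonpos hl0 hn2.le (by linarith)
    calc ((2 : ℝ) ^ n) ^ (-β) = 2 ^ β * ((2 : ℝ) ^ (n + 1)) ^ (-β) := by
          rw [pow_succ, Real.mul_rpow (by positivity) (by positivity),
            Real.rpow_neg (by norm_num : (0 : ℝ) ≤ 2)]
          have : (2 : ℝ) ^ β ≠ 0 := by positivity
          field_simp
      _ ≤ _ := by gcongr
  exact h4.trans ((iter n).trans (by gcongr; exact hGnn u))

/-- Potter-type bound for a regularly varying function asymptotically proportional to a
nonincreasing one. -/
lemma potter_bound {α : ℝ} {H : ℝ → ℝ} (hHpos : ∀ u : ℝ, 0 < u → 0 < H u)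
    (hHrv : ∀ l : ℝ, 0 < l →
      Tendsto (fun u => H (l * u) / H u) atTop (𝓝 (l ^ (-α))))
    {G : ℝ → ℝ} (hG : AntitoneOn G (Ioi 0)) (hGnn : ∀ u, 0 ≤ G u) {w : ℝ} (hw : 0 < w)
    (hlim : Tendsto (fun u => G u / H u) atTop (𝓝 w))
    {β : ℝ} (hβ : 0 < β) (hβα : β < α) {K : ℝ} (hK : 0 < K) :
    ∃ C : ℝ, 0 ≤ C ∧ ∀ᶠ u in atTop, ∀ g : ℝ, 0 < g → g ≤ K → H (u / g) ≤ C * g ^ β * H u := by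
  have h2 : Tendsto (fun u : ℝ => 2 * u) atTop atTop := tendsto_id.const_mul_atTop (by norm_num)
  -- `G(2u)/G(u)` has the limit `2^(-α) < 2^(-β)`, being asymptotic to `H(2u)/H(u)`
  have hGd : Tendsto (fun u => (G (2 * u) / H (2 * u)) * (H (2 * u) / H u) / (G u / H u)) atTop
      (𝓝 (2 ^ (-α))) := by
    have := ((hlim.comp h2).mul (hHrv 2 (by norm_num))).div hlim hw.ne'
    rwa [mul_div_cancel_left₀ _ hw.ne'] at this
  have hlt : (2 : ℝ) ^ (-α) < 2 ^ (-β) :=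
    Real.rpow_lt_rpow_of_exponent_lt (by norm_num) (by linarith)
  have e1 := hGd.eventually_lt_const hlt
  have e2 := hlim.eventually_const_lt (show w / 2 < w by linarith)
  have e3 := hlim.eventually_lt_const (show w < 2 * w by linarith)
  obtain ⟨X, hX⟩ := eventually_atTop.1 (e1.and (e2.and (e3.and (eventually_gt_atTop 0))))
  have hX0 : 0 < X := (hX X le_rfl).2.2.2
  have hup : ∀ u, X ≤ u → G u ≤ 2 * w * H u := fun u hu =>
    ((div_lt_iff₀ (hHpos u (hX u hu).2.2.2)).1 (hX u hu).2.2.1).le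
  have hlo : ∀ u, X ≤ u → w / 2 * H u < G u := fun u hu =>
    (lt_div_iff₀ (hHpos u (hX u hu).2.2.2)).1 (hX u hu).2.1
  have hdouble : ∀ u, X ≤ u → G (2 * u) ≤ 2 ^ (-β) * G u := by
    intro u hu
    obtain ⟨a1, a2, a3, a4⟩ := hX u hu
    have p1 := hHpos u a4
    have p2 := hHpos (2 * u) (by linarith)
    have p3 : 0 < G u := lt_trans (by positivity) (hlo u hu)
    have : (G (2 * u) / H (2 * u)) * (H (2 * u) / H u) / (G u / H u) = G (2 * u) / G u := by
      field_simp
    rw [this, div_lt_iff₀ p3] at a1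
    exact a1.le
  have eK := (hHrv K⁻¹ (by positivity)).eventually_lt_const (lt_add_one _)
  set B := K⁻¹ ^ (-α) + 1 with hB
  have hBpos : 0 < B := by positivity
  refine ⟨4 * 2 ^ β * K ^ (-β) * B, by positivity, ?_⟩
  filter_upwards [eK, eventually_ge_atTop (K * X), eventually_gt_atTop 0] with u hu1 hu2 hu3 g hg hgK
  have p := hHpos u hu3
  rw [div_lt_iff₀ p] at hu1
  have hv : X ≤ K⁻¹ * u := by
    rw [inv_mul_eq_div, le_div_iff₀ hK]; linarith
  have hl : 1 ≤ K / g := (one_le_div hg).2 hgK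
  have hug : u / g = K / g * (K⁻¹ * u) := by field_simp
  have hXg : X ≤ u / g := by
    rw [hug]; exact hv.trans (le_mul_of_one_le_left (hX0.le.trans hv) hl)
  have d := dyadic_decay hG hβ hX0 hGnn hdouble hv hl
  rw [← hug] at d
  have hKg : (K / g) ^ (-β) = K ^ (-β) * g ^ β := by
    rw [Real.div_rpow hK.le hg.le, Real.rpow_neg hg.le, div_inv_eq_mul]
  rw [hKg] at d
  have q : w / 2 * H (u / g) ≤ 2 ^ β * (K ^ (-β) * g ^ β) * (2 * w * (B * H u)) := by
    refine (hlo _ hXg).le.trans (d.trans ?_)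
    gcongr
    refine (hup _ hv).trans ?_
    gcongr
  have : w / 2 * H (u / g) ≤ w / 2 * (4 * 2 ^ β * K ^ (-β) * B * g ^ β * H u) := by
    refine q.trans (le_of_eq ?_); ring
  exact le_of_mul_le_mul_left this (by positivity)

/-- The domination needed for dominated convergence, uniform in `s` for large `u`. -/
lemma tail_bound {S : Type*} {α : ℝ} {H : ℝ → ℝ} (hHpos : ∀ u : ℝ, 0 < u → 0 < H u)
    (hHrv : ∀ l : ℝ, 0 < l →
      Tendsto (fun u => H (l * u) / H u) atTop (𝓝 (l ^ (-α))))
    {R : S → ℝ → ℝ} (hRnn : ∀ s u, 0 ≤ R s u) (hRanti : ∀ s, AntitoneOn (R s) (Ioi 0))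
    {w : S → ℝ} (hwnn : ∀ s, 0 ≤ w s)
    (hlim : ∀ s, Tendsto (fun u => R s u / H u) atTop (𝓝 (w s)))
    {u₀ : ℝ} (hdom : ∀ s, ∀ u : ℝ, u₀ < u → R s u ≤ 2 * w s * H u)
    {g : S → ℝ} {K : ℝ} (hK : 0 < K) (hg0 : ∀ s, 0 ≤ g s) (hgK : ∀ s, g s ≤ K)
    {β : ℝ} (hβ : 0 < β) (hβα : β < α) :
    ∃ C : ℝ, 0 ≤ C ∧ ∀ᶠ u in atTop, ∀ s,
      (H u)⁻¹ * (if 0 < g s then R s (u / g s) else 0) ≤ C * (w s * g s ^ β) := by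
  have hP : ∃ C : ℝ, 0 ≤ C ∧ ∀ᶠ u in atTop, ∀ s, 0 < g s →
      w s * H (u / g s) ≤ w s * (C * g s ^ β * H u) := by
    by_cases h : ∃ s₀, 0 < w s₀
    · obtain ⟨s₀, h₀⟩ := h
      obtain ⟨C, hC, hev⟩ :=
        potter_bound hHpos hHrv (hRanti s₀) (hRnn s₀) h₀ (hlim s₀) hβ hβα hK
      refine ⟨C, hC, hev.mono fun u hu s hs => ?_⟩
      exact mul_le_mul_of_nonneg_left (hu _ hs (hgK s)) (hwnn s)
    · push Not at h
      refine ⟨0, le_rfl, Eventually.of_forall fun u s _ => ?_⟩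
      simp [le_antisymm (h s) (hwnn s)]
  obtain ⟨C, hC, hev⟩ := hP
  refine ⟨2 * C, by positivity, ?_⟩
  filter_upwards [hev, eventually_gt_atTop 0, eventually_gt_atTop (K * |u₀|)] with u hu hu2 hu3 s
  have p := hHpos u hu2
  split_ifs with hs
  · have h1 : u₀ < u / g s := by
      rw [lt_div_iff₀ hs]
      calc u₀ * g s ≤ |u₀| * g s := by gcongr; exact le_abs_self _
        _ ≤ |u₀| * K := by gcongr; exact hgK s
        _ < u := by linarith
    rw [inv_mul_le_iff₀ p]
    have h2 := hdom s _ h1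
    have h3 := hu s hs
    nlinarith
  · have := hwnn s
    have := Real.rpow_nonneg (hg0 s) β
    rw [mul_zero]; positivity

lemma tail_tendsto {α : ℝ} (hα : 0 < α) {H : ℝ → ℝ} (hHpos : ∀ u : ℝ, 0 < u → 0 < H u)
    (hHrv : ∀ l : ℝ, 0 < l →
      Tendsto (fun u => H (l * u) / H u) atTop (𝓝 (l ^ (-α))))
    {R : ℝ → ℝ} {w : ℝ} (hlim : Tendsto (fun u => R u / H u) atTop (𝓝 w))
    {g : ℝ} (hg0 : 0 ≤ g) :
    Tendsto (fun u => (H u)⁻¹ * (if 0 < g then R (u / g) else 0)) atTop (𝓝 (w * g ^ α)) := by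
  rcases hg0.eq_or_lt with rfl | hg
  · simp [Real.zero_rpow hα.ne']
  · simp only [hg, if_true]
    have h1 : Tendsto (fun u : ℝ => g⁻¹ * u) atTop atTop :=
      tendsto_id.const_mul_atTop (by positivity)
    have h2 := (hlim.comp h1).mul (hHrv g⁻¹ (by positivity))
    rw [Real.inv_rpow hg.le, Real.rpow_neg hg.le, inv_inv] at h2
    refine h2.congr' ?_
    filter_upwards [eventually_gt_atTop 0] with u hu
    have p1 := hHpos u hu
    have p2 := hHpos (g⁻¹ * u) (by positivity)
    simp only [Function.comp, div_eq_inv_mul u g]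
    rw [div_mul_div_cancel₀ p2.ne', div_eq_inv_mul]

/-- Lemma 3.3(i), second equality in (3.11): regular variation of the integrated tail
functional of the local Lévy measures under the supremum of the kernel. -/
theorem excursion_levy_sup_tail_asymptotics
    {S : Type*} [MeasurableSpace S] (m : Measure S) [SigmaFinite m]
    {d : ℕ} (M : Set (EuclideanSpace ℝ (Fin d)))
    (hMcpt : IsCompact M) (hMne : M.Nonempty)
    (α : ℝ) (hα : 0 < α)
    (H : ℝ → ℝ) (hHmeas : Measurable H) (hHpos : ∀ u : ℝ, 0 < u → 0 < H u)
    (hHrv : ∀ l : ℝ, 0 < l →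
      Tendsto (fun u => H (l * u) / H u) atTop (𝓝 (l ^ (-α))))
    (Rp Rm : S → ℝ → ℝ)
    (hRpmeas : Measurable fun p : S × ℝ => Rp p.1 p.2)
    (hRmmeas : Measurable fun p : S × ℝ => Rm p.1 p.2)
    (hRpnn : ∀ s u, 0 ≤ Rp s u) (hRmnn : ∀ s u, 0 ≤ Rm s u)
    (hRpanti : ∀ s, AntitoneOn (Rp s) (Ioi 0))
    (hRmanti : ∀ s, AntitoneOn (Rm s) (Ioi 0))
    (wp wm : S → ℝ) (hwpmeas : Measurable wp) (hwmmeas : Measurable wm)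
    (hwpnn : ∀ s, 0 ≤ wp s) (hwmnn : ∀ s, 0 ≤ wm s)
    (hlimp : ∀ s, Tendsto (fun u => Rp s u / H u) atTop (𝓝 (wp s)))
    (hlimm : ∀ s, Tendsto (fun u => Rm s u / H u) atTop (𝓝 (wm s)))
    (u₀ : ℝ) (hu₀ : 0 < u₀)
    (hdomp : ∀ s, ∀ u : ℝ, u₀ < u → Rp s u ≤ 2 * wp s * H u)
    (hdomm : ∀ s, ∀ u : ℝ, u₀ < u → Rm s u ≤ 2 * wm s * H u)
    (f : S → EuclideanSpace ℝ (Fin d) → ℝ)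
    (hfmeas : Measurable fun p : S × EuclideanSpace ℝ (Fin d) => f p.1 p.2)
    (hfcont : ∀ s, ContinuousOn (f s) M)
    (K : ℝ) (hKbd : ∀ s, ∀ t ∈ M, |f s t| ≤ K)
    (ε : ℝ) (hε : 0 < ε) (hεα : ε < α)
    (hint : Integrable
      (fun s => (wp s + wm s) * (sSup ((fun t => |f s t|) '' M)) ^ (α - ε)) m) :
    Tendsto
      (fun u : ℝ => (H u)⁻¹ *
        ∫ s,
          ((if 0 < sSup ((fun t => max (f s t) 0) '' M) then
              Rp s (u / sSup ((fun t => max (f s t) 0) '' M)) else 0) +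
           (if 0 < sSup ((fun t => max (-(f s t)) 0) '' M) then
              Rm s (u / sSup ((fun t => max (-(f s t)) 0) '' M)) else 0)) ∂m)
      atTop
      (𝓝 (∫ s,
          (wp s * (sSup ((fun t => max (f s t) 0) '' M)) ^ α +
           wm s * (sSup ((fun t => max (-(f s t)) 0) '' M)) ^ α) ∂m)) := by
  have hβ : 0 < α - ε := by linarith
  have hβα : α - ε < α := by linarith
  have hK : 0 < max K 1 := lt_max_of_lt_right one_pos
  -- properties shared by the two suprema, with `φ` the positive or the negative part
  have aux : ∀ φ : ℝ → ℝ, Continuous φ → (∀ x, 0 ≤ φ x) → (∀ x, φ x ≤ |x|) →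
      (Measurable fun s => sSup ((fun t => φ (f s t)) '' M)) ∧
      ∀ s, 0 ≤ sSup ((fun t => φ (f s t)) '' M) ∧
        sSup ((fun t => φ (f s t)) '' M) ≤ sSup ((fun t => |f s t|) '' M) ∧
        sSup ((fun t => φ (f s t)) '' M) ≤ max K 1 := by
    intro φ hφ hφ0 hφa
    have hle : ∀ s, ∀ t ∈ M, φ (f s t) ≤ K := fun s t ht => (hφa _).trans (hKbd s t ht)
    refine ⟨measurable_sSup_image M hMne (fun s t => φ (f s t)) (hφ.measurable.comp hfmeas)
      (fun s => hφ.comp_continuousOn (hfcont s)) (fun s => ⟨K, forall_mem_image.2 (hle s)⟩),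
      fun s => ⟨?_, ?_, ?_⟩⟩
    · exact Real.sSup_nonneg (forall_mem_image.2 fun t _ => hφ0 _)
    · refine csSup_le (hMne.image _) (forall_mem_image.2 fun t ht => (hφa _).trans ?_)
      exact le_csSup ⟨K, forall_mem_image.2 (hKbd s)⟩ ⟨t, ht, rfl⟩
    · exact csSup_le (hMne.image _)
        (forall_mem_image.2 fun t ht => (hle s t ht).trans (le_max_left _ _))
  obtain ⟨hpm, hp⟩ := aux (fun x => max x 0) (by fun_prop) (fun x => le_max_right _ _)
    (fun x => max_le (le_abs_self x) (abs_nonneg x))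
  obtain ⟨hmm, hm⟩ := aux (fun x => max (-x) 0) (by fun_prop) (fun x => le_max_right _ _)
    (fun x => max_le (neg_le_abs x) (abs_nonneg x))
  set gp : S → ℝ := fun s => sSup ((fun t => max (f s t) 0) '' M) with hgp
  set gm : S → ℝ := fun s => sSup ((fun t => max (-(f s t)) 0) '' M) with hgm
  set ga : S → ℝ := fun s => sSup ((fun t => |f s t|) '' M) with hga
  change Tendsto (fun u : ℝ => (H u)⁻¹ * ∫ s, ((if 0 < gp s then Rp s (u / gp s) else 0) +
    (if 0 < gm s then Rm s (u / gm s) else 0)) ∂m) atTop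
    (𝓝 (∫ s, (wp s * gp s ^ α + wm s * gm s ^ α) ∂m))
  obtain ⟨Cp, hCp, hbp⟩ := tail_bound hHpos hHrv hRpnn hRpanti hwpnn hlimp hdomp hK
    (fun s => (hp s).1) (fun s => (hp s).2.2) hβ hβα
  obtain ⟨Cm, hCm, hbm⟩ := tail_bound hHpos hHrv hRmnn hRmanti hwmnn hlimm hdomm hK
    (fun s => (hm s).1) (fun s => (hm s).2.2) hβ hβα
  have hmeas : ∀ (R : S → ℝ → ℝ) (g : S → ℝ), (Measurable fun p : S × ℝ => R p.1 p.2) →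
      Measurable g → ∀ u : ℝ, Measurable fun s => if 0 < g s then R s (u / g s) else 0 :=
    fun R g hR hg u => Measurable.ite (measurableSet_lt measurable_const hg)
      (hR.comp (measurable_id.prodMk (measurable_const.div hg))) measurable_const
  simp_rw [← integral_const_mul]
  refine tendsto_integral_filter_of_dominated_convergence
    (fun s => (Cp + Cm) * ((wp s + wm s) * ga s ^ (α - ε))) ?_ ?_ (hint.const_mul _) ?_
  · exact Eventually.of_forall fun u => (((hmeas Rp gp hRpmeas hpm u).add
      (hmeas Rm gm hRmmeas hmm u)).const_mul _).aestronglyMeasurable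
  · filter_upwards [hbp, hbm, eventually_gt_atTop 0] with u h1 h2 hu
    refine Eventually.of_forall fun s => ?_
    have p := hHpos u hu
    have n1 : 0 ≤ (if 0 < gp s then Rp s (u / gp s) else 0) := by
      split_ifs; exacts [hRpnn _ _, le_rfl]
    have n2 : 0 ≤ (if 0 < gm s then Rm s (u / gm s) else 0) := by
      split_ifs; exacts [hRmnn _ _, le_rfl]
    rw [Real.norm_of_nonneg (by positivity), mul_add]
    refine (add_le_add (h1 s) (h2 s)).trans ?_
    have wp0 := hwpnn s
    have wm0 := hwmnn s
    have a0 : 0 ≤ ga s := (hp s).1.trans (hp s).2.1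
    have b1 : gp s ^ (α - ε) ≤ ga s ^ (α - ε) := Real.rpow_le_rpow (hp s).1 (hp s).2.1 hβ.le
    have b2 : gm s ^ (α - ε) ≤ ga s ^ (α - ε) := Real.rpow_le_rpow (hm s).1 (hm s).2.1 hβ.le
    have q := Real.rpow_nonneg a0 (α - ε)
    have q1 : 0 ≤ gp s ^ (α - ε) := Real.rpow_nonneg (hp s).1 _
    have q2 : 0 ≤ gm s ^ (α - ε) := Real.rpow_nonneg (hm s).1 _
    calc Cp * (wp s * gp s ^ (α - ε)) + Cm * (wm s * gm s ^ (α - ε))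
        ≤ Cp * ((wp s + wm s) * ga s ^ (α - ε)) + Cm * ((wp s + wm s) * ga s ^ (α - ε)) := by
          gcongr <;> linarith
      _ = _ := by ring
  · refine Eventually.of_forall fun s => ?_
    simp_rw [mul_add]
    exact (tail_tendsto hα hHpos hHrv (hlimp s) (hp s).1).add
      (tail_tendsto hα hHpos hHrv (hlimm s) (hm s).1)
end

section
/- Let (S, 𝒮, m) be a σ-finite measure space, α > 0, and let H : (0,∞) → (0,∞) be regularly varying at infinity with exponent −α. Let R₊, R₋ : S × (0,∞) → [0,∞) be jointly measurable, nonincreasing in the second variable, and suppose there exist measurable w₊, w₋ : S → [0,∞) with R₊(s,u)/H(u) → w₊(s) and R₋(s,u)/H(u) → w₋(s) as u → ∞ for every s ∈ S, and a u₀ > 0 such that R₊(s,u) ≤ 2w₊(s)H(u) and R₋(s,u) ≤ 2w₋(s)H(u) for all u > u₀ and all s ∈ S. Let M ⊂ ℝ^d be compact and f : S × M → ℝ be jointly measurable, continuous in the second variable, with sup_{s∈S, t∈M} |f(s,t)| ≤ K < ∞. If for some ε ∈ (0, α) one has ∫_S (w₊(s) + w₋(s)) (sup_{t∈M} |f(s,t)|)^{α−ε}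 m(ds) < ∞, then lim_{u→∞} H(u)^{−1} ∫_S [ R₊(s, u / sup_{t∈M} |f(s,t)|) + R₋(s, u / sup_{t∈M} |f(s,t)|) ] m(ds) = ∫_S (w₊(s) + w₋(s)) (sup_{t∈M} |f(s,t)|)^α m(ds), with the convention that a term R_±(s, u/0) is interpreted as 0 when sup_{t∈M} |f(s,t)| = 0. -/
/-!
The limit is obtained by dominated convergence. Write `X s` for the supremum of `|f s ·|` over `M`.
Pointwise, `R s (u / X s) / H u` is the product of `R s (u / X s) / H (u / X s) → w s` and
`H (u / X s) / H u → (X s) ^ α`. An integrable majorant comes from a Potter-type bound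
`H (u / x) ≤ C * x ^ (α - ε) * H u`, uniform in `0 < x ≤ L` and large `u`.

The uniform convergence theorem for regularly varying functions is not needed for the Potter bound.
If both weights vanish identically the majorant is trivial. Otherwise some weight `w s₀` is positive,
and `H` is asymptotically proportional to the nonincreasing function `R s₀`
(`potter_of_antitone_equiv`). For a nonincreasing function, the bound follows by iterating
`G (2 * u) ≤ 2 ^ (-β) * G u` along dyadic scales (`antitone_dyadic_bound`).
-/

open MeasureTheory Filter Set Topology

/-- One-step decay along doublings gives power decay along all scales, by monotonicity between
consecutive powers of two. -/
lemma antitone_dyadic_bound {G : ℝ → ℝ} (hG : AntitoneOn G (Ioi 0))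
    (hGnn : ∀ u, 0 ≤ G u) {β U : ℝ} (hβ : 0 < β) (hU : 0 < U)
    (h2 : ∀ u, U ≤ u → G (2 * u) ≤ 2 ^ (-β) * G u) :
    ∀ u, U ≤ u → ∀ y : ℝ, 1 ≤ y → G (y * u) ≤ 2 ^ β * y ^ (-β) * G u := by
  intro u hu y hy
  have hu0 : 0 < u := hU.trans_le hu
  have hiter : ∀ n : ℕ, G (2 ^ n * u) ≤ ((2 : ℝ) ^ (-β)) ^ n * G u := by
    intro n
    induction n with
    | zero => simp
    | succ n ih =>
      have h1 : U ≤ 2 ^ n * u :=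
        hu.trans (le_mul_of_one_le_left hu0.le (one_le_pow₀ one_le_two))
      calc G (2 ^ (n + 1) * u) = G (2 * (2 ^ n * u)) := by congr 1; ring
        _ ≤ 2 ^ (-β) * G (2 ^ n * u) := h2 _ h1
        _ ≤ 2 ^ (-β) * (((2 : ℝ) ^ (-β)) ^ n * G u) := by gcongr
        _ = _ := by ring
  obtain ⟨n, hn1, hn2⟩ := exists_nat_pow_near hy one_lt_two
  have hy0 : 0 < y := by linarith
  have hmono : G (y * u) ≤ G (2 ^ n * u) :=
    hG (mem_Ioi.2 (by positivity)) (mem_Ioi.2 (by positivity)) (by gcongr)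
  refine hmono.trans ((hiter n).trans ?_)
  refine mul_le_mul_of_nonneg_right ?_ (hGnn u)
  have e1 : ((2 : ℝ) ^ (-β)) ^ n = 2 ^ β * ((2 : ℝ) ^ (n + 1)) ^ (-β) := by
    rw [← Real.rpow_natCast, ← Real.rpow_natCast, ← Real.rpow_mul (by norm_num),
      ← Real.rpow_mul (by norm_num), ← Real.rpow_add (by norm_num)]
    congr 1
    push_cast
    ring
  rw [e1]
  exact mul_le_mul_of_nonneg_left
    (Real.rpow_le_rpow_of_nonpos hy0 hn2.le (by linarith)) (by positivity)

/-- Potter-type bound for a regularly varying `H` that is asymptotically proportional to a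
nonincreasing function. -/
lemma potter_of_antitone_equiv {H G : ℝ → ℝ} {α β w L : ℝ}
    (hHpos : ∀ u : ℝ, 0 < u → 0 < H u)
    (hHrv : ∀ l : ℝ, 0 < l → Tendsto (fun u => H (l * u) / H u) atTop (𝓝 (l ^ (-α))))
    (hG : AntitoneOn G (Ioi 0)) (hGnn : ∀ u, 0 ≤ G u) (hw : 0 < w)
    (hlim : Tendsto (fun u => G u / H u) atTop (𝓝 w))
    (hβ : 0 < β) (hβα : β < α) (hL : 0 < L) :
    ∃ C : ℝ, 0 ≤ C ∧ ∃ U : ℝ, ∀ u, U ≤ u → ∀ x, 0 < x → x ≤ L →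
      H (u / x) ≤ C * x ^ β * H u := by
  -- `H` and `G` are comparable up to constants near infinity.
  obtain ⟨U₁, hU₁⟩ : ∃ U₁ : ℝ, ∀ u, U₁ ≤ u → 0 < u ∧ w / 2 * H u < G u ∧ G u < 2 * w * H u := by
    have h := ((eventually_gt_atTop (0 : ℝ)).and
      ((hlim.eventually_const_lt (show w / 2 < w by linarith)).and
        (hlim.eventually_lt_const (show w < 2 * w by linarith))))
    obtain ⟨U₁, h⟩ := eventually_atTop.1 h
    refine ⟨U₁, fun u hu => ?_⟩
    obtain ⟨h0, h1, h2⟩ := h u hu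
    exact ⟨h0, (lt_div_iff₀ (hHpos u h0)).1 h1, (div_lt_iff₀ (hHpos u h0)).1 h2⟩
  -- `G (2 * u) / G u → 2 ^ (-α) < 2 ^ (-β)`.
  obtain ⟨U₂, hU₂⟩ : ∃ U₂ : ℝ, ∀ u, U₂ ≤ u → G (2 * u) ≤ 2 ^ (-β) * G u := by
    have ht : Tendsto (fun u : ℝ => 2 * u) atTop atTop :=
      tendsto_id.const_mul_atTop two_pos
    have h := (((hlim.comp ht).mul (hHrv 2 two_pos)).div hlim hw.ne')
    have hlt : w * 2 ^ (-α) / w < (2 : ℝ) ^ (-β) := by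
      rw [mul_div_cancel_left₀ _ hw.ne']
      exact Real.rpow_lt_rpow_of_exponent_lt one_lt_two (by linarith)
    obtain ⟨U₂, h⟩ := eventually_atTop.1 ((h.eventually_lt_const hlt).and
      (eventually_ge_atTop (max U₁ 0)))
    refine ⟨U₂, fun u hu => ?_⟩
    obtain ⟨h1, h2⟩ := h u hu
    obtain ⟨h0, h3, -⟩ := hU₁ u ((le_max_left _ _).trans h2)
    have hHu := hHpos u h0
    have hH2u := hHpos (2 * u) (by linarith)
    have hGu : 0 < G u := lt_trans (by positivity) h3
    rw [← div_le_iff₀ hGu]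
    refine le_of_eq_of_le ?_ h1.le
    simp only [Pi.div_apply, Function.comp]
    field_simp
  -- Passing from `u` to `u / L` costs only a constant.
  obtain ⟨U₃, hU₃⟩ : ∃ U₃ : ℝ, ∀ u, U₃ ≤ u →
      0 < u ∧ H (L⁻¹ * u) ≤ ((L⁻¹) ^ (-α) + 1) * H u := by
    have h := (hHrv L⁻¹ (by positivity)).eventually_lt_const (lt_add_one _)
    obtain ⟨U₃, h⟩ := eventually_atTop.1 (h.and (eventually_gt_atTop (0 : ℝ)))
    exact ⟨U₃, fun u hu => ⟨(h u hu).2, ((div_lt_iff₀ (hHpos u (h u hu).2)).1 (h u hu).1).le⟩⟩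
  set V : ℝ := max (max U₁ U₂) 1 with hV
  have hVpos : 0 < V := lt_of_lt_of_le one_pos (le_max_right _ _)
  have hdy := antitone_dyadic_bound hG hGnn hβ hVpos
    (fun u hu => hU₂ u (((le_max_right _ _).trans (le_max_left _ _)).trans hu))
  have hD : 0 < (L⁻¹) ^ (-α) + 1 := by positivity
  refine ⟨4 * 2 ^ β * L ^ (-β) * ((L⁻¹) ^ (-α) + 1), by positivity, max U₃ (L * V), ?_⟩
  intro u hu x hx hxL
  obtain ⟨hu0, h3⟩ := hU₃ u ((le_max_left _ _).trans hu)
  have hcu : V ≤ L⁻¹ * u := by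
    rw [inv_mul_eq_div, le_div_iff₀ hL, mul_comm]
    exact (le_max_right _ _).trans hu
  have hV1 : U₁ ≤ V := (le_max_left _ _).trans (le_max_left _ _)
  have hy : 1 ≤ L / x := (one_le_div hx).2 hxL
  have e : L / x * (L⁻¹ * u) = u / x := by field_simp
  have hux : U₁ ≤ u / x := by
    rw [← e]
    exact (hV1.trans hcu).trans (le_mul_of_one_le_left (hVpos.trans_le hcu).le hy)
  have h4 := hdy _ hcu _ hy
  rw [e] at h4
  have h5 := (hU₁ _ hux).2.1
  have h6 := (hU₁ _ (hV1.trans hcu)).2.2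
  have e2 : (L / x) ^ (-β) = L ^ (-β) * x ^ β := by
    rw [Real.div_rpow hL.le hx.le, Real.rpow_neg hx.le, div_inv_eq_mul]
  have hA : (0 : ℝ) ≤ 2 ^ β * (L / x) ^ (-β) := by positivity
  have h7 : w / 2 * H (u / x) ≤
      2 ^ β * (L / x) ^ (-β) * (2 * w * (((L⁻¹) ^ (-α) + 1) * H u)) := by
    refine h5.le.trans (h4.trans (mul_le_mul_of_nonneg_left (h6.le.trans ?_) hA))
    exact mul_le_mul_of_nonneg_left h3 (by positivity)
  rw [e2] at h7
  have hw2 : 0 < w / 2 := by positivity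
  refine le_of_mul_le_mul_left (h7.trans (le_of_eq ?_)) hw2
  ring

/-- By continuity in `t`, the supremum over `M` equals the supremum over a countable dense subset of
`M`, hence is measurable in `s`. The bound `K` keeps the real-valued suprema from taking junk values. -/
lemma measurable_sSup_abs_image {S E : Type*} [MeasurableSpace S]
    [TopologicalSpace E] [SecondCountableTopology E] [MeasurableSpace E]
    {M : Set E} (hMne : M.Nonempty)
    {f : S → E → ℝ} (hfmeas : Measurable fun p : S × E => f p.1 p.2)
    (hfcont : ∀ s, ContinuousOn (f s) M)
    {K : ℝ} (hKbd : ∀ s, ∀ t ∈ M, |f s t| ≤ K) :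
    Measurable fun s => sSup ((fun t => |f s t|) '' M) := by
  have : Nonempty M := hMne.to_subtype
  let D := TopologicalSpace.denseSeq M
  have hD : DenseRange D := TopologicalSpace.denseRange_denseSeq M
  have hbdd : ∀ s, BddAbove ((fun t => |f s t|) '' M) := fun s =>
    ⟨K, by rintro _ ⟨t, ht, rfl⟩; exact hKbd s t ht⟩
  have hbddD : ∀ s, BddAbove (range fun n => |f s (D n)|) := fun s =>
    ⟨K, by rintro _ ⟨n, rfl⟩; exact hKbd s _ (D n).2⟩
  have heq : (fun s => sSup ((fun t => |f s t|) '' M)) = fun s => ⨆ n, |f s (D n)| := by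
    funext s
    apply le_antisymm
    · refine csSup_le (hMne.image _) ?_
      rintro _ ⟨t, ht, rfl⟩
      have hc : Continuous fun t : M => |f s t| :=
        (continuousOn_iff_continuous_domRestrict.1 (hfcont s)).abs
      have hcl : IsClosed {t : M | |f s t| ≤ ⨆ n, |f s (D n)|} :=
        isClosed_le hc continuous_const
      exact isClosed_property hD hcl (fun n => le_ciSup (hbddD s) n) ⟨t, ht⟩
    · exact ciSup_le fun n => le_csSup (hbdd s) ⟨D n, (D n).2, rfl⟩
  rw [heq]
  refine Measurable.iSup fun n => ?_
  exact (hfmeas.comp (measurable_id.prodMk measurable_const)).abs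

/-- Pointwise limit of the integrand, including the degenerate case `x = 0`, where both sides
vanish. -/
lemma tendsto_tail_ratio {H R : ℝ → ℝ} {α w x : ℝ} (hα : 0 < α) (hx : 0 ≤ x)
    (hHpos : ∀ u : ℝ, 0 < u → 0 < H u)
    (hHrv : ∀ l : ℝ, 0 < l → Tendsto (fun u => H (l * u) / H u) atTop (𝓝 (l ^ (-α))))
    (hlim : Tendsto (fun u => R u / H u) atTop (𝓝 w)) :
    Tendsto (fun u => (H u)⁻¹ * if 0 < x then R (u / x) else 0) atTop (𝓝 (w * x ^ α)) := by
  rcases hx.eq_or_lt with rfl | hx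
  · simp [Real.zero_rpow hα.ne']
  have ht : Tendsto (fun u : ℝ => x⁻¹ * u) atTop atTop :=
    tendsto_id.const_mul_atTop (inv_pos.2 hx)
  have h := (hlim.comp ht).mul (hHrv x⁻¹ (inv_pos.2 hx))
  rw [Real.inv_rpow hx.le, Real.rpow_neg hx.le, inv_inv] at h
  refine h.congr' ?_
  filter_upwards [eventually_gt_atTop (0 : ℝ)] with u hu
  have h1 := hHpos u hu
  have h2 := hHpos (x⁻¹ * u) (by positivity)
  simp only [hx, if_true, Function.comp]
  rw [div_eq_inv_mul u x, div_mul_div_cancel₀ h2.ne']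
  exact div_eq_inv_mul _ _

/-- Lemma 3.3(i), equation (3.12): regular variation of the integrated tail functional
of the local Lévy measures under the supremum of the absolute value of the kernel. -/
theorem excursion_levy_abs_sup_tail_asymptotics
    {S : Type*} [MeasurableSpace S] (m : Measure S) [SigmaFinite m]
    {d : ℕ} (M : Set (EuclideanSpace ℝ (Fin d)))
    (hMcpt : IsCompact M) (hMne : M.Nonempty)
    (α : ℝ) (hα : 0 < α)
    (H : ℝ → ℝ) (hHmeas : Measurable H) (hHpos : ∀ u : ℝ, 0 < u → 0 < H u)
    (hHrv : ∀ l : ℝ, 0 < l →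
      Tendsto (fun u => H (l * u) / H u) atTop (𝓝 (l ^ (-α))))
    (Rp Rm : S → ℝ → ℝ)
    (hRpmeas : Measurable fun p : S × ℝ => Rp p.1 p.2)
    (hRmmeas : Measurable fun p : S × ℝ => Rm p.1 p.2)
    (hRpnn : ∀ s u, 0 ≤ Rp s u) (hRmnn : ∀ s u, 0 ≤ Rm s u)
    (hRpanti : ∀ s, AntitoneOn (Rp s) (Ioi 0))
    (hRmanti : ∀ s, AntitoneOn (Rm s) (Ioi 0))
    (wp wm : S → ℝ) (hwpmeas : Measurable wp) (hwmmeas : Measurable wm)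
    (hwpnn : ∀ s, 0 ≤ wp s) (hwmnn : ∀ s, 0 ≤ wm s)
    (hlimp : ∀ s, Tendsto (fun u => Rp s u / H u) atTop (𝓝 (wp s)))
    (hlimm : ∀ s, Tendsto (fun u => Rm s u / H u) atTop (𝓝 (wm s)))
    (u₀ : ℝ) (hu₀ : 0 < u₀)
    (hdomp : ∀ s, ∀ u : ℝ, u₀ < u → Rp s u ≤ 2 * wp s * H u)
    (hdomm : ∀ s, ∀ u : ℝ, u₀ < u → Rm s u ≤ 2 * wm s * H u)
    (f : S → EuclideanSpace ℝ (Fin d) → ℝ)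
    (hfmeas : Measurable fun p : S × EuclideanSpace ℝ (Fin d) => f p.1 p.2)
    (hfcont : ∀ s, ContinuousOn (f s) M)
    (K : ℝ) (hKbd : ∀ s, ∀ t ∈ M, |f s t| ≤ K)
    (ε : ℝ) (hε : 0 < ε) (hεα : ε < α)
    (hint : Integrable
      (fun s => (wp s + wm s) * (sSup ((fun t => |f s t|) '' M)) ^ (α - ε)) m) :
    Tendsto
      (fun u : ℝ => (H u)⁻¹ *
        ∫ s,
          ((if 0 < sSup ((fun t => |f s t|) '' M) then
              Rp s (u / sSup ((fun t => |f s t|) '' M)) else 0) +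
           (if 0 < sSup ((fun t => |f s t|) '' M) then
              Rm s (u / sSup ((fun t => |f s t|) '' M)) else 0)) ∂m)
      atTop
      (𝓝 (∫ s, (wp s + wm s) * (sSup ((fun t => |f s t|) '' M)) ^ α ∂m)) := by
  set X : S → ℝ := fun s => sSup ((fun t => |f s t|) '' M) with hX
  have hXmeas : Measurable X := measurable_sSup_abs_image hMne hfmeas hfcont hKbd
  have hXnn : ∀ s, 0 ≤ X s := fun s =>
    Real.sSup_nonneg (by rintro _ ⟨t, -, rfl⟩; exact abs_nonneg _)
  set L : ℝ := max K 1 with hLdef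
  have hL : 0 < L := lt_of_lt_of_le one_pos (le_max_right _ _)
  have hXL : ∀ s, X s ≤ L := fun s =>
    (csSup_le (hMne.image _) (by rintro _ ⟨t, ht, rfl⟩; exact hKbd s t ht)).trans
      (le_max_left _ _)
  have hβ : 0 < α - ε := by linarith
  have hβα : α - ε < α := by linarith
  -- The factor `wp s + wm s` makes the bound trivial when both weights vanish identically.
  obtain ⟨C, U, hpot⟩ : ∃ C U : ℝ, ∀ u, U ≤ u → ∀ x, 0 < x → x ≤ L → ∀ s,
      (wp s + wm s) * H (u / x) ≤ (wp s + wm s) * (C * x ^ (α - ε) * H u) := by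
    by_cases hz : ∀ s, wp s = 0 ∧ wm s = 0
    · exact ⟨0, 0, fun u _ x _ _ s => by simp [hz s]⟩
    · push Not at hz
      obtain ⟨s₀, hs₀⟩ := hz
      have key : ∃ C : ℝ, 0 ≤ C ∧ ∃ U : ℝ, ∀ u, U ≤ u → ∀ x, 0 < x → x ≤ L →
          H (u / x) ≤ C * x ^ (α - ε) * H u := by
        by_cases hp : wp s₀ = 0
        · exact potter_of_antitone_equiv hHpos hHrv (hRmanti s₀) (hRmnn s₀)
            (lt_of_le_of_ne (hwmnn s₀) (hs₀ hp).symm) (hlimm s₀) hβ hβα hL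
        · exact potter_of_antitone_equiv hHpos hHrv (hRpanti s₀) (hRpnn s₀)
            (lt_of_le_of_ne (hwpnn s₀) (Ne.symm hp)) (hlimp s₀) hβ hβα hL
      obtain ⟨C, -, U, h⟩ := key
      exact ⟨C, U, fun u hu x hx hxL s =>
        mul_le_mul_of_nonneg_left (h u hu x hx hxL) (add_nonneg (hwpnn s) (hwmnn s))⟩
  simp_rw [← integral_const_mul]
  refine tendsto_integral_filter_of_dominated_convergence
    (fun s => 2 * C * ((wp s + wm s) * X s ^ (α - ε))) ?_ ?_ (hint.const_mul _) ?_
  · refine Eventually.of_forall fun u => Measurable.aestronglyMeasurable ?_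
    have hset : MeasurableSet {s | 0 < X s} := measurableSet_lt measurable_const hXmeas
    have hpair : Measurable fun s => (s, u / X s) :=
      measurable_id.prodMk (measurable_const.div hXmeas)
    exact ((Measurable.ite hset (hRpmeas.comp hpair) measurable_const).add
      (Measurable.ite hset (hRmmeas.comp hpair) measurable_const)).const_mul _
  · filter_upwards [eventually_ge_atTop U, eventually_gt_atTop (L * u₀)] with u hu1 hu2
    refine Eventually.of_forall fun s => ?_
    have hu0 : 0 < u := lt_trans (by positivity) hu2
    have hHu := hHpos u hu0
    change ‖(H u)⁻¹ * ((if 0 < X s then Rp s (u / X s) else 0) +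
      (if 0 < X s then Rm s (u / X s) else 0))‖ ≤ _
    rcases (hXnn s).eq_or_lt with h0 | h0
    · simp [← h0, Real.zero_rpow hβ.ne']
    · simp only [h0, if_true]
      have hux : u₀ < u / X s := by
        rw [lt_div_iff₀ h0]
        nlinarith [hXL s]
      rw [Real.norm_of_nonneg (mul_nonneg (inv_nonneg.2 hHu.le)
        (add_nonneg (hRpnn _ _) (hRmnn _ _))), inv_mul_le_iff₀ hHu]
      have h1 := hdomp s _ hux
      have h2 := hdomm s _ hux
      have h3 := hpot u hu1 _ h0 (hXL s) s
      linarith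
  · refine Eventually.of_forall fun s => ?_
    have h := (tendsto_tail_ratio hα (hXnn s) hHpos hHrv (hlimp s)).add
      (tendsto_tail_ratio hα (hXnn s) hHpos hHrv (hlimm s))
    rw [← add_mul] at h
    refine h.congr fun u => ?_
    rw [← mul_add]
end

section
/- Let ρ₀ be a symmetric Borel measure on ℝ∖{0} (i.e. ρ₀(−B) = ρ₀(B) for all Borel B) whose tail T₀(u) = ρ₀((u,∞)) is finite for every u > 0 and regularly varying at infinity with exponent −α for some α > 1, and suppose that T₀(u) ≤ a u^{−β} for all 0 < u < 1, for some finite a > 0 and some β ∈ [1,2). Let Z be a standard normal random variable and define the mixed tail T(u) = E[ρ₀({x ∈ ℝ : Zx > u})] for u > 0, which by the symmetry of ρ₀ equals E[T₀(u/|Z|)]. Then T(u) < ∞ for every u > 0, and lim_{u→∞} T(u)/T₀(u) = E[|Z|^α]. -/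
open MeasureTheory Filter Set Topology ProbabilityTheory

/-!
By symmetry of `ρ₀`, the integrand `ρ₀ {x | z * x > u}` equals `T₀ (u / |z|)` for `z ≠ 0`, where
`T₀ u = ρ₀ (Ioi u)`. Regular variation gives `T₀ (u / |z|) / T₀ u → |z| ^ α` for each such `z`, and
the limit passes through the Gaussian integral by dominated convergence.

The dominating function comes from a Potter-type bound (`potter_bound`): for `u` beyond some
threshold `U` and *every* `y > 0`, `T₀ (u / y) ≤ C * (1 + y ^ k) * T₀ u`. Above the threshold it is
obtained by iterating the doubling inequality `T₀ (u / 2) ≤ 2 ^ k * T₀ u`; once the halved argument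
falls below `U`, the growth bound `T₀ v ≤ a * v ^ (-β)` near `0`, with `β < 2`, takes over. All
Gaussian moments being finite, the bound is integrable. Taking `u = U` and rescaling `y` in the same
bound shows that the mixed tail is finite at every `u > 0`.
-/

/-- Iterated doubling for a nonincreasing positive function: a one-step doubling inequality on
`[U, ∞)` and growth of at most `4 ^ n` along `U / 2 ^ (n + 1)` give geometric control of
`f (u / 2 ^ n)`, uniformly over `u ≥ U / 2`. -/
lemma iterated_doubling {f : ℝ → ℝ} (hpos : ∀ u, 0 < u → 0 < f u)
    (hanti : ∀ u v, 0 < u → u ≤ v → f v ≤ f u) {U K D : ℝ} (hU : 0 < U) (hK : 4 ≤ K)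
    (hD : 1 ≤ D) (hdbl : ∀ u, U ≤ u → f (u / 2) ≤ K * f u)
    (hgrow : ∀ n : ℕ, f (U / 2 ^ (n + 1)) ≤ D * 4 ^ n * f U) (n : ℕ) :
    ∀ u, U / 2 ≤ u → f (u / 2 ^ n) ≤ D * K ^ n * f u := by
  induction n with
  | zero =>
    intro u hu
    have := hpos u (by linarith)
    simp only [pow_zero, div_one, mul_one]
    nlinarith
  | succ n ih =>
    intro u hu
    have hu0 : 0 < u := by linarith
    rcases le_total U u with h | h
    · have h1 := ih (u / 2) (by linarith)
      have h2 := hdbl u h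
      have h3 : u / 2 ^ (n + 1) = u / 2 / 2 ^ n := by
        rw [pow_succ]; field_simp
      rw [h3]
      calc f (u / 2 / 2 ^ n) ≤ D * K ^ n * f (u / 2) := h1
        _ ≤ D * K ^ n * (K * f u) := by gcongr
        _ = D * K ^ (n + 1) * f u := by ring
    · have h1 : f (u / 2 ^ (n + 1)) ≤ f (U / 2 ^ (n + 1 + 1)) := by
        apply hanti _ _ (by positivity)
        rw [pow_succ _ (n + 1), mul_comm, ← div_div]
        gcongr
      calc f (u / 2 ^ (n + 1)) ≤ D * 4 ^ (n + 1) * f U := h1.trans (hgrow (n + 1))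
        _ ≤ D * K ^ (n + 1) * f u := by
          have := hanti u U hu0 h
          have := hpos U hU
          gcongr

/-- A Potter-type bound valid for all `y > 0`, including those for which `u / y` is close to `0`. -/
lemma potter_bound_s3 {f : ℝ → ℝ} (hpos : ∀ u, 0 < u → 0 < f u)
    (hanti : ∀ u v, 0 < u → u ≤ v → f v ≤ f u) {α : ℝ}
    (hrv : Tendsto (fun u => f (2⁻¹ * u) / f u) atTop (𝓝 ((2⁻¹ : ℝ) ^ (-α))))
    {a β : ℝ} (ha : 0 < a) (hβ2 : β ≤ 2)
    (hsmall : ∀ u, 0 < u → u < 1 → f u ≤ a * u ^ (-β)) :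
    ∃ (U C : ℝ) (k : ℕ), 0 < U ∧ 0 < C ∧
      ∀ u, U ≤ u → ∀ y, 0 < y → f (u / y) ≤ C * (1 + y ^ k) * f u := by
  obtain ⟨k₀, hk₀⟩ := pow_unbounded_of_one_lt ((2⁻¹ : ℝ) ^ (-α)) (one_lt_two : (1 : ℝ) < 2)
  obtain ⟨k, hkk, hk2⟩ : ∃ k, k₀ ≤ k ∧ 2 ≤ k := ⟨max k₀ 2, le_max_left _ _, le_max_right _ _⟩
  have hk : (2⁻¹ : ℝ) ^ (-α) < 2 ^ k :=
    hk₀.trans_le (pow_le_pow_right₀ (by norm_num) hkk)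
  obtain ⟨U, hU⟩ := eventually_atTop.1 ((hrv.eventually_lt_const hk).and (eventually_ge_atTop 1))
  have hU1 : 1 ≤ U := (hU U le_rfl).2
  have hU0 : 0 < U := by linarith
  have hfU := hpos U hU0
  have hf1 := hpos 1 one_pos
  have hdbl : ∀ u, U ≤ u → f (u / 2) ≤ 2 ^ k * f u := by
    intro u hu
    have h := (hU u hu).1
    rw [div_lt_iff₀ (hpos u (by linarith))] at h
    rw [div_eq_inv_mul]
    exact h.le
  have hK : (4 : ℝ) ≤ 2 ^ k := by
    calc (4 : ℝ) = 2 ^ 2 := by norm_num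
      _ ≤ 2 ^ k := pow_le_pow_right₀ (by norm_num) hk2
  set D : ℝ := 1 + (4 * a + f 1) / f U with hDdef
  have hD : 1 ≤ D := by
    have : 0 ≤ (4 * a + f 1) / f U := by positivity
    linarith
  have hDf : 4 * a + f 1 ≤ D * f U := by
    rw [hDdef, add_mul, div_mul_cancel₀ _ hfU.ne']
    linarith
  have hgrow : ∀ n : ℕ, f (U / 2 ^ (n + 1)) ≤ D * 4 ^ n * f U := by
    intro n
    have h4 : (1 : ℝ) ≤ 4 ^ n := one_le_pow₀ (by norm_num)
    have key : f (U / 2 ^ (n + 1)) ≤ (4 * a + f 1) * 4 ^ n := by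
      rcases lt_or_ge (U / 2 ^ (n + 1)) 1 with h | h
      · have hp : (0 : ℝ) < U / 2 ^ (n + 1) := by positivity
        have h1 := hsmall _ hp h
        have h2 : (U / 2 ^ (n + 1)) ^ (-β) ≤ 4 * 4 ^ n := by
          calc (U / 2 ^ (n + 1)) ^ (-β) ≤ (U / 2 ^ (n + 1)) ^ (-2 : ℝ) :=
                Real.rpow_le_rpow_of_exponent_ge hp h.le (by linarith)
            _ ≤ (1 / 2 ^ (n + 1)) ^ (-2 : ℝ) :=
                Real.rpow_le_rpow_of_nonpos (by positivity) (by gcongr) (by norm_num)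
            _ = 4 * 4 ^ n := by
                rw [Real.rpow_neg (by positivity), Real.rpow_two, one_div, inv_pow, inv_inv,
                  ← pow_mul, mul_comm (n + 1) 2, pow_mul, pow_succ]
                norm_num
                ring
        calc f (U / 2 ^ (n + 1)) ≤ a * (4 * 4 ^ n) := h1.trans (by gcongr)
          _ ≤ (4 * a + f 1) * 4 ^ n := by nlinarith
      · have := hanti 1 _ one_pos h
        nlinarith
    calc _ ≤ (4 * a + f 1) * 4 ^ n := key
      _ ≤ (D * f U) * 4 ^ n := by gcongr
      _ = _ := by ring
  refine ⟨U, D * 2 ^ k, k, hU0, by positivity, fun u hu y hy => ?_⟩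
  have hu0 : 0 < u := by linarith
  have hfu := hpos u hu0
  have h2k : (1 : ℝ) ≤ 2 ^ k := one_le_pow₀ (by norm_num)
  rcases le_total y 1 with h | h
  · have h1 : f (u / y) ≤ f u := hanti _ _ hu0 (by rw [le_div_iff₀ hy]; nlinarith)
    have h2 : 1 ≤ D * 2 ^ k * (1 + y ^ k) := by
      have : 1 ≤ D * 2 ^ k := one_le_mul_of_one_le_of_one_le hD h2k
      exact one_le_mul_of_one_le_of_one_le this (by linarith [pow_pos hy k])
    nlinarith
  · obtain ⟨n, hn1, hn2⟩ := exists_nat_pow_near h (one_lt_two : (1 : ℝ) < 2)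
    have h1 : f (u / y) ≤ f (u / 2 ^ (n + 1)) := hanti _ _ (by positivity) (by gcongr)
    have h2 := iterated_doubling hpos hanti hU0 hK hD hdbl hgrow (n + 1) u (by linarith)
    have h3 : ((2 : ℝ) ^ k) ^ (n + 1) ≤ 2 ^ k * (1 + y ^ k) := by
      have : ((2 : ℝ) ^ k) ^ n ≤ y ^ k := by
        rw [← pow_mul, mul_comm, pow_mul]; gcongr
      rw [pow_succ, mul_comm]
      gcongr
      linarith
    calc f (u / y) ≤ D * (2 ^ k) ^ (n + 1) * f u := h1.trans h2
      _ ≤ D * (2 ^ k * (1 + y ^ k)) * f u := by gcongr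
      _ = _ := by ring

lemma symm_scaled_tail (ρ₀ : Measure ℝ) (hsymm : Measure.map (fun x : ℝ => -x) ρ₀ = ρ₀)
    (u : ℝ) {z : ℝ} (hz : z ≠ 0) : ρ₀ {x : ℝ | z * x > u} = ρ₀ (Ioi (u / |z|)) := by
  rcases lt_or_gt_of_ne hz with h | h
  · have hs : {x : ℝ | z * x > u} = (fun x : ℝ => -x) ⁻¹' Ioi (u / |z|) := by
      ext x
      simp only [mem_ofPred_eq, mem_preimage, mem_Ioi, abs_of_neg h]
      rw [div_lt_iff₀ (by linarith)]
      constructor <;> intro <;> nlinarith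
    rw [hs, ← Measure.map_apply measurable_neg measurableSet_Ioi, hsymm]
  · congr 1
    ext x
    simp only [mem_ofPred_eq, mem_Ioi, abs_of_pos h]
    rw [div_lt_iff₀ h, mul_comm]

lemma integrable_abs_pow_gaussian (k : ℕ) :
    Integrable (fun z : ℝ => |z| ^ k) (gaussianReal 0 1) := by
  have h := (memLp_id_gaussianReal (μ := 0) (v := 1) (k : NNReal)).integrable_norm_pow'
  simpa using h

/-- Equation (3.9) in Section 6.1: the Gaussian-mixed Lévy measure
`ρ(B) = E[ρ₀(Z⁻¹ B)]` of a type-G field has finite tails, and its tail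
`T(u) = E[ρ₀{x : Zx > u}]` is asymptotically equivalent to `E[|Z|^α] · ρ₀((u,∞))`. -/
theorem typeG_mixed_tail_equivalence
    (ρ₀ : Measure ℝ)
    (hsymm : Measure.map (fun x : ℝ => -x) ρ₀ = ρ₀)
    (hzero : ρ₀ {0} = 0)
    (htail : ∀ u : ℝ, 0 < u → ρ₀ (Ioi u) < ⊤)
    (α : ℝ) (hα : 1 < α)
    (hrv : ∀ l : ℝ, 0 < l →
      Tendsto (fun u => (ρ₀ (Ioi (l * u))).toReal / (ρ₀ (Ioi u)).toReal)
        atTop (𝓝 (l ^ (-α))))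
    (a β : ℝ) (ha : 0 < a) (hβ1 : 1 ≤ β) (hβ2 : β < 2)
    (hsmall : ∀ u : ℝ, 0 < u → u < 1 →
      ρ₀ (Ioi u) ≤ ENNReal.ofReal (a * u ^ (-β))) :
    (∀ u : ℝ, 0 < u →
      (∫⁻ z, ρ₀ {x : ℝ | z * x > u} ∂(gaussianReal 0 1)) < ⊤) ∧
    Tendsto
      (fun u : ℝ =>
        (∫⁻ z, ρ₀ {x : ℝ | z * x > u} ∂(gaussianReal 0 1)).toReal /
          (ρ₀ (Ioi u)).toReal)
      atTop (𝓝 (∫ z, |z| ^ α ∂(gaussianReal 0 1))) := by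
  set f : ℝ → ℝ := fun u => (ρ₀ (Ioi u)).toReal with hf
  have hanti : ∀ u v, 0 < u → u ≤ v → f v ≤ f u := fun u v hu huv =>
    ENNReal.toReal_mono (htail u hu).ne (measure_mono (Ioi_subset_Ioi huv))
  -- The case `l = 1` of regular variation forces `f u ≠ 0` for large `u`, as `0 / 0 = 0`.
  have hpos : ∀ u, 0 < u → 0 < f u := by
    intro u hu
    have h1 := hrv 1 one_pos
    rw [Real.one_rpow] at h1
    obtain ⟨v, hv, huv⟩ :=
      ((h1.eventually_const_lt one_half_lt_one).and (eventually_ge_atTop u)).exists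
    have hne : f v ≠ 0 := by
      intro h0
      have h0' : (ρ₀ (Ioi v)).toReal = 0 := h0
      rw [h0', div_zero] at hv
      norm_num at hv
    exact (lt_of_le_of_ne ENNReal.toReal_nonneg hne.symm).trans_le (hanti u v hu huv)
  have hsmall' : ∀ u, 0 < u → u < 1 → f u ≤ a * u ^ (-β) := fun u hu hu1 =>
    ENNReal.toReal_le_of_le_ofReal (by positivity) (hsmall u hu hu1)
  obtain ⟨U, C, k, hU, hC, hpot⟩ := potter_bound_s3 hpos hanti (hrv 2⁻¹ (by norm_num)) ha
    hβ2.le hsmall'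
  have : NullSingletonClass (gaussianReal 0 1) := nullSingletonClass_gaussianReal one_ne_zero
  have hne : ∀ᵐ z ∂(gaussianReal 0 1), z ≠ 0 := by
    simpa [ae_iff] using measure_singleton (μ := gaussianReal 0 1) (0 : ℝ)
  have hae : ∀ u : ℝ, (fun z => ρ₀ {x : ℝ | z * x > u}) =ᵐ[gaussianReal 0 1]
      fun z => ρ₀ (Ioi (u / |z|)) := fun u => by
    filter_upwards [hne] with z hz using symm_scaled_tail ρ₀ hsymm u hz
  have hmeas : ∀ u : ℝ, Measurable fun z : ℝ => ρ₀ (Ioi (u / |z|)) := fun u => by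
    have hA : Antitone fun v : ℝ => ρ₀ (Ioi v) := fun v w h => measure_mono (Ioi_subset_Ioi h)
    exact hA.measurable.comp (measurable_const.div measurable_id.abs)
  have hint : ∀ c : ℝ, Integrable (fun z : ℝ => C * (1 + (c * |z|) ^ k)) (gaussianReal 0 1) := by
    intro c
    simp only [mul_pow]
    exact ((integrable_const 1).add ((integrable_abs_pow_gaussian k).const_mul _)).const_mul _
  refine ⟨fun u hu => ?_, ?_⟩
  · rw [lintegral_congr_ae (hae u)]
    -- Writing `u / |z| = U / (U / u * |z|)` reduces to the bound at the threshold `U`.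
    refine lt_of_le_of_lt (lintegral_mono_ae ?_)
      ((hint (U / u)).mul_const (f U)).lintegral_lt_top
    filter_upwards [hne] with z hz
    have hz' : 0 < |z| := abs_pos.2 hz
    have h := hpot U le_rfl (U / u * |z|) (by positivity)
    have he : U / (U / u * |z|) = u / |z| := by field_simp
    rw [he] at h
    exact ENNReal.le_ofReal_iff_toReal_le (htail _ (by positivity)).ne
      (ENNReal.toReal_nonneg.trans h) |>.2 h
  · have hDCT : Tendsto (fun u => ∫ z, f (u / |z|) / f u ∂(gaussianReal 0 1)) atTop
        (𝓝 (∫ z, |z| ^ α ∂(gaussianReal 0 1))) := by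
      refine tendsto_integral_filter_of_dominated_convergence
        (fun z => C * (1 + (1 * |z|) ^ k)) ?_ ?_ (hint 1) ?_
      · exact Eventually.of_forall fun u =>
          ((hmeas u).ennreal_toReal.div_const _).aestronglyMeasurable
      · filter_upwards [eventually_ge_atTop U] with u hu
        filter_upwards [hne] with z hz
        have hfu := hpos u (by linarith)
        rw [Real.norm_of_nonneg (div_nonneg ENNReal.toReal_nonneg hfu.le), div_le_iff₀ hfu,
          one_mul]
        exact hpot u hu _ (abs_pos.2 hz)
      · filter_upwards [hne] with z hz
        have hz' : 0 < |z| := abs_pos.2 hz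
        have h := hrv |z|⁻¹ (by positivity)
        rw [Real.inv_rpow hz'.le, Real.rpow_neg hz'.le, inv_inv] at h
        simpa only [hf, div_eq_inv_mul _ |z|] using h
    refine hDCT.congr' ?_
    filter_upwards [eventually_gt_atTop 0] with u hu
    rw [integral_div, lintegral_congr_ae (hae u)]
    congr 1
    refine integral_toReal (hmeas u).aemeasurable ?_
    filter_upwards [hne] with z hz
    exact htail _ (div_pos hu (abs_pos.2 hz))
end
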